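/- Let A be an n×n SK-matrix with eigenvalues λ_1 > λ_2 > … > λ_n > 0 (all positive and simple), and let r = 1 or r = n. If μ^(r)_1 > μ^(r)_2 > … > μ^(r)_{n−1} > 0 are the eigenvalues of the principal submatrix A_r of A obtained by deleting the r-th row and the r-th column, then λ_j > μ_j^(r) > λ_{j+1} for all j = 1, …, n−1. -/

import Mathlib

open Matrix

/-- The minor of the matrix `A` on the row set `α` and the column set `β`
(rows and columns taken in increasing order); junk value `0` if the
cardinalities of `α` and `β` differ. -/
noncomputable def minorOn {n : ℕ} (A : Matrix (Fin n) (Fin n) ℝ)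
    (α β : Finset (Fin n)) : ℝ :=
  if h : β.card = α.card then
    (A.submatrix (⇑(α.orderEmbOfFin rfl)) (⇑(β.orderEmbOfFin h))).det
  else 0

/-- The principal submatrix `A(α)` of `A` on the index set `α`. -/
def psub {n : ℕ} (A : Matrix (Fin n) (Fin n) ℝ) (α : Finset (Fin n)) :
    Matrix (Fin α.card) (Fin α.card) ℝ :=
  A.submatrix (⇑(α.orderEmbOfFin rfl)) (⇑(α.orderEmbOfFin rfl))

/-- `A` is a Kotelyansky (K) matrix: all principal minors are positive and all
almost principal minors are nonnegative. -/
def IsK {n : ℕ} (A : Matrix (Fin n) (Fin n) ℝ) : Prop :=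
  (∀ α : Finset (Fin n), α.Nonempty → 0 < minorOn A α α) ∧
  (∀ (α : Finset (Fin n)) (r s : Fin n), r ∈ α → s ∈ α → r ≠ s →
    0 ≤ minorOn A (α.erase r) (α.erase s))

/-- `A` is a strictly Kotelyansky (SK) matrix: all principal minors and all
almost principal minors are positive. -/
def IsSK {n : ℕ} (A : Matrix (Fin n) (Fin n) ℝ) : Prop :=
  (∀ α : Finset (Fin n), α.Nonempty → 0 < minorOn A α α) ∧
  (∀ (α : Finset (Fin n)) (r s : Fin n), r ∈ α → s ∈ α → r ≠ s →
    0 < minorOn A (α.erase r) (α.erase s))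

/-- The `j`-th compound matrix of `A`: the matrix of all `j×j` minors of `A`,
indexed by the `j`-element subsets of the index set. -/
noncomputable def compound {m : ℕ} (A : Matrix (Fin m) (Fin m) ℝ) (j : ℕ) :
    Matrix {s : Finset (Fin m) // s.card = j} {s : Finset (Fin m) // s.card = j} ℝ :=
  fun s t => minorOn A s.1 t.1

/-- `A` is J-sign-symmetric for the subset `J` of its index set. -/
def IsJS {ι : Type*} (J : Set ι) (A : Matrix ι ι ℝ) : Prop :=
  (∀ i j, ((i ∈ J ∧ j ∈ J) ∨ (i ∉ J ∧ j ∉ J)) → 0 ≤ A i j) ∧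
  (∀ i j, ((i ∈ J ∧ j ∉ J) ∨ (i ∉ J ∧ j ∈ J)) → A i j ≤ 0)

/-- `A` is strictly J-sign-symmetric: J-sign-symmetric with no zero entries. -/
def IsSJS {ι : Type*} (J : Set ι) (A : Matrix ι ι ℝ) : Prop :=
  IsJS J A ∧ ∀ i j, A i j ≠ 0

/-- `A` is strictly totally J-sign-symmetric: every compound matrix `A^(j)`,
`1 ≤ j ≤ n`, is strictly J-sign-symmetric for some subset of its index set. -/
def IsSTJS {n : ℕ} (A : Matrix (Fin n) (Fin n) ℝ) : Prop :=
  ∀ j, 1 ≤ j → j ≤ n →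
    ∃ J : Set {s : Finset (Fin n) // s.card = j}, IsSJS J (compound A j)

/-- `A` is J-sign-symmetric Kotelyansky (JSK). -/
def IsJSK {n : ℕ} (A : Matrix (Fin n) (Fin n) ℝ) : Prop :=
  (∀ α : Finset (Fin n), α.Nonempty → 0 < minorOn A α α) ∧
  ∀ α : Finset (Fin n), 2 ≤ α.card →
    ∃ J : Set {s : Finset (Fin α.card) // s.card = α.card - 1},
      IsJS J (compound (psub A α) (α.card - 1))

/-- `A` is strictly J-sign-symmetric Kotelyansky (SJSK). -/
def IsSJSK {n : ℕ} (A : Matrix (Fin n) (Fin n) ℝ) : Prop :=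
  0 < A.det ∧
  ∀ α : Finset (Fin n), 2 ≤ α.card →
    ∃ J : Set {s : Finset (Fin α.card) // s.card = α.card - 1},
      IsSJS J (compound (psub A α) (α.card - 1))

/-- `l(B)`: the smallest real eigenvalue of `B`, or `∞` (`⊤` in `EReal`) if `B`
has no real eigenvalues. -/
noncomputable def lval {m : ℕ} (B : Matrix (Fin m) (Fin m) ℝ) : EReal :=
  sInf (insert (⊤ : EReal) ((fun t : ℝ => (t : EReal)) '' {t : ℝ | B.charpoly.IsRoot t}))

lemma det_updateCol_single_self {R : Type*} [CommRing R] {n : ℕ}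
    (M : Matrix (Fin (n+1)) (Fin (n+1)) R) (k : Fin (n+1)) :
    (M.updateCol k (Pi.single k 1)).det = (M.submatrix k.succAbove k.succAbove).det := by
  rw [det_succ_column _ k, Finset.sum_eq_single k]
  · simp [Even.neg_one_pow (Even.add_self (k:ℕ)), Matrix.submatrix_updateCol_succAbove]
  · intro b _ hb
    simp [Pi.single_eq_of_ne hb]
  · simp

lemma det_two_cols {R : Type*} [CommRing R] {ι : Type*} [Fintype ι] [DecidableEq ι]
    (i j : ι) (hij : i ≠ j) (a b : ι → R) :
    (((1 : Matrix ι ι R).updateCol i a).updateCol j b).det = a i * b j - b i * a j := by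
  have h : ((1 : Matrix ι ι R).updateCol i a).updateCol j b =
      1 + (Matrix.of fun (x : ι) (y : Fin 2) => if y = 0 then a x - (1 : Matrix ι ι R) x i
          else b x - (1 : Matrix ι ι R) x j) *
        (Matrix.of fun (y : Fin 2) (x : ι) => if y = 0 then (1 : Matrix ι ι R) i x
          else (1 : Matrix ι ι R) j x) := by
    ext x y
    simp only [updateCol_apply, Matrix.add_apply, Matrix.mul_apply, Fin.sum_univ_two, of_apply]
    by_cases hy : y = j
    · subst hy
      simp [hij]
    · by_cases hy' : y = i
      · subst hy'
        simp [hij, Matrix.one_apply_ne hij.symm]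
      · simp [hy, hy', Matrix.one_apply_ne (Ne.symm hy), Matrix.one_apply_ne (Ne.symm hy')]
  rw [h, det_one_add_mul_comm, det_fin_two]
  simp [Matrix.mul_apply, Matrix.one_apply, hij, hij.symm, Finset.sum_sub_distrib, sub_mul, mul_sub]

lemma desnanot_mul {R : Type*} [CommRing R] {n : ℕ}
    (N : Matrix (Fin (n+2)) (Fin (n+2)) R) :
    N.det * (N.adjugate 0 0 * N.adjugate (Fin.last _) (Fin.last _) -
      N.adjugate 0 (Fin.last _) * N.adjugate (Fin.last _) 0) =
    N.det * (N.det * ((N.submatrix Fin.castSucc Fin.castSucc).submatrix Fin.succ Fin.succ).det) := by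
  have hne : (0 : Fin (n+2)) ≠ Fin.last _ := (Fin.last_pos).ne
  have h1 := det_two_cols (R := R) 0 (Fin.last (n+1)) hne (fun x => N.adjugate x 0)
    (fun x => N.adjugate x (Fin.last _))
  rw [← h1, ← det_mul]
  have hc : ∀ k, N *ᵥ (fun x => N.adjugate x k) = N.det • (Pi.single k 1 : Fin (n+2) → R) := by
    intro k
    ext x
    have := congrFun (congrFun (mul_adjugate N) x) k
    rw [Matrix.mul_apply] at this
    simp only [mulVec, dotProduct, this, Matrix.smul_apply, Pi.smul_apply, Matrix.one_apply, Pi.single_apply]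
  rw [Matrix.mul_updateCol, Matrix.mul_updateCol, hc, hc, mul_one, det_updateCol_smul,
    updateCol_comm _ hne, det_updateCol_smul, updateCol_comm _ hne.symm, det_updateCol_single_self]
  congr 2
  have : (N.updateCol 0 (Pi.single 0 1)).submatrix (Fin.last (n+1)).succAbove (Fin.last (n+1)).succAbove
    = (N.submatrix Fin.castSucc Fin.castSucc).updateCol 0 (Pi.single 0 1) := by
    ext x y
    simp only [submatrix_apply, Fin.succAbove_last, updateCol_apply, Pi.single_apply]
    simp
  rw [this, det_updateCol_single_self]
  simp

lemma desnanot_charpoly {n : ℕ} (A : Matrix (Fin (n+2)) (Fin (n+2)) ℝ) (x : ℝ) :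
    A.charpoly.eval x * ((A.submatrix Fin.castSucc Fin.castSucc).submatrix Fin.succ Fin.succ).charpoly.eval x =
    (A.submatrix Fin.succ Fin.succ).charpoly.eval x * (A.submatrix Fin.castSucc Fin.castSucc).charpoly.eval x
    - ((A - diagonal (fun _ => x)).submatrix Fin.succ Fin.castSucc).det *
      ((A - diagonal (fun _ => x)).submatrix Fin.castSucc Fin.succ).det := by
  have h := desnanot_mul A.charmatrix
  have h := mul_left_cancel₀ (show A.charmatrix.det ≠ 0 from A.charpoly_monic.ne_zero) h
  have h := congrArg (Polynomial.eval x) h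
  simp only [adjugate_fin_succ_eq_det_submatrix, Polynomial.eval_mul, Polynomial.eval_sub] at h
  have key : ∀ (m : ℕ) (f g : Fin m → Fin (n+2)), (A.charmatrix.submatrix f g).det.eval x
      = (-1)^m * ((A - diagonal (fun _ => x)).submatrix f g).det := by
    intro m f g
    have := det_smul ((A - diagonal (fun _ => x)).submatrix f g) (-1)
    rw [Fintype.card_fin] at this
    rw [← this, ← Polynomial.coe_evalRingHom, RingHom.map_det]
    congr 1
    ext i j
    by_cases hij : f i = g j
    · simp [hij, charmatrix_apply]
    · simp [hij, charmatrix_apply]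
  have cp : ∀ (m : ℕ) (f : Fin m → Fin (n+2)), Function.Injective f → (A.submatrix f f).charpoly.eval x
     = (-1)^m * ((A - diagonal (fun _ => x)).submatrix f f).det := by
    intro m f hf
    rw [← key, charpoly]
    congr 2
    ext1 i j
    by_cases hij : i = j
    · subst hij; simp [charmatrix_apply]
    · simp [hij, charmatrix_apply, hf.ne hij]
  have cs := Fin.castSucc_injective
  have ss := Fin.succ_injective
  rw [submatrix_submatrix] at h ⊢
  rw [key] at h
  rw [cp _ _ (ss _), cp _ _ (cs _), cp _ _ ((cs _).comp (ss _))]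
  rw [charpoly]
  simp only [Fin.succAbove_zero, Fin.succAbove_last, key, Polynomial.eval_pow, Polynomial.eval_neg,
    Polynomial.eval_one] at h
  rw [← h]
  have e : ((-1:ℝ)^(n+1))*((-1)^(n+1)) = 1 := by rw [← pow_add]; exact Even.neg_one_pow ⟨_, rfl⟩
  simp
  ring_nf
  have e2 : ((-1:ℝ)^(n*2)) = 1 := Even.neg_one_pow ⟨n, by ring⟩
  have e4 : ((-1:ℝ)^(n*4)) = 1 := Even.neg_one_pow ⟨2*n, by ring⟩
  simp [e2, e4]

lemma minor_step {k : ℕ} (N : Matrix (Fin (k+3)) (Fin (k+3)) ℝ) (i : Fin (k+3))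
    (h0 : i ≠ 0) (hl : i ≠ Fin.last _) (c : ℝ) :
    ((N - diagonal (Pi.single i c)).submatrix Fin.succ Fin.castSucc).det =
    (N.submatrix Fin.succ Fin.castSucc).det +
      c * ((N.submatrix i.succAbove i.succAbove).submatrix Fin.succ Fin.castSucc).det := by
  obtain ⟨a, ha⟩ := Fin.exists_succ_eq.2 h0
  obtain ⟨b, hb⟩ := Fin.exists_castSucc_eq.2 hl
  have hab : (b : ℕ) = a + 1 := by
    have := ha.trans hb.symm
    have := congrArg Fin.val this
    simpa using this.symm
  have e : (N - diagonal (Pi.single i c)).submatrix Fin.succ Fin.castSucc =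
     (N.submatrix Fin.succ Fin.castSucc).updateRow a
      ((N.submatrix Fin.succ Fin.castSucc) a + (-c) • Pi.single b 1) := by
    ext x y
    rw [updateRow_apply]
    by_cases hx : x = a
    · subst hx
      by_cases hy : y = b
      · subst hy
        simp [ha, hb, sub_eq_add_neg]
      · have : i ≠ y.castSucc := by rw [← hb]; simpa using Ne.symm hy
        simp [ha, hy, diagonal_apply_ne _ this]
    · have : x.succ ≠ i := by rw [← ha]; simpa using hx
      simp only [hx, if_false, submatrix_apply, Matrix.sub_apply, diagonal_apply, Pi.single_apply, this]
      simp
  rw [e, det_updateRow_add, updateRow_eq_self, det_updateRow_smul, ← adjugate_apply,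
    adjugate_fin_succ_eq_det_submatrix]
  have s : (-1 : ℝ)^((a:ℕ)+(b:ℕ)) = -1 := by
    rw [hab]; exact Odd.neg_one_pow ⟨a, by ring⟩
  rw [s]
  have m : (N.submatrix Fin.succ Fin.castSucc).submatrix a.succAbove b.succAbove =
    (N.submatrix i.succAbove i.succAbove).submatrix Fin.succ Fin.castSucc := by
    ext x y
    simp only [submatrix_apply]
    congr 1
    · rw [← ha, Fin.succ_succAbove_succ]
    · rw [← hb, Fin.castSucc_succAbove_castSucc]
  rw [m]
  simp

def QPos {n : ℕ} (A : Matrix (Fin n) (Fin n) ℝ) : Prop :=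
  ∀ (k : ℕ) (f : Fin (k+2) → Fin n), StrictMono f →
    0 < (A.submatrix (f ∘ Fin.succ) (f ∘ Fin.castSucc)).det

lemma minor_pos (m : ℕ) : ∀ (A : Matrix (Fin (m+2)) (Fin (m+2)) ℝ), QPos A →
    ∀ d : Fin (m+2) → ℝ, (∀ i, 0 ≤ d i) →
    0 < ((A - diagonal d).submatrix Fin.succ Fin.castSucc).det := by
  induction m using Nat.strong_induction_on with
  | _ m ih =>
  intro A hA d hd
  suffices H : ∀ (s : Finset (Fin (m+2))) (d : Fin (m+2) → ℝ), (∀ i, 0 ≤ d i) → (∀ i, i ∉ s → d i = 0) →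
     0 < ((A - diagonal d).submatrix Fin.succ Fin.castSucc).det from
    H Finset.univ d hd (by simp)
  clear hd d
  intro s
  induction s using Finset.induction_on with
  | empty =>
    intro d _ h
    have : d = 0 := by ext i; exact h i (by simp)
    subst this
    have := hA m id strictMono_id
    simpa using this
  | insert i s hi ihs =>
    intro d hd h
    have hd' : ∀ j, 0 ≤ Function.update d i 0 j := by
      intro j
      by_cases hj : j = i
      · subst hj; simp
      · simpa [hj] using hd j
    have h' : ∀ j, j ∉ s → Function.update d i 0 j = 0 := by
      intro j hjs
      by_cases hj : j = i
      · subst hj; simp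
      · simpa [hj] using h j (by simp [hj, hjs])
    have I := ihs _ hd' h'
    have split : A - diagonal d = (A - diagonal (Function.update d i 0)) - diagonal (Pi.single i (d i)) := by
      rw [sub_sub, diagonal_add]
      congr 2
      ext j
      by_cases hj : j = i
      · subst hj; simp
      · simp [hj]
    by_cases h0 : i = 0
    · convert I using 2
      rw [split]
      ext x y
      simp [diagonal_apply, Pi.single_apply, h0]
    by_cases hl : i = Fin.last _
    · convert I using 2
      rw [split]
      ext x y
      simp only [submatrix_apply, Matrix.sub_apply, diagonal_apply, Pi.single_apply, hl]
      split_ifs with h1 h2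
      · rw [h1] at h2; exact absurd h2 (Fin.castSucc_lt_last _).ne
      · simp
      · simp
    obtain _ | m := m
    · exfalso
      have := i.2
      have a : (i : ℕ) ≠ 0 := fun h => h0 (Fin.ext h)
      have b : (i : ℕ) ≠ 1 := fun h => hl (Fin.ext h)
      omega
    rw [split, minor_step _ i h0 hl]
    have J := ih m (by omega) (A.submatrix i.succAbove i.succAbove)
      (fun k f hf => by
        have := hA k (i.succAbove ∘ f) ((Fin.strictMono_succAbove i).comp hf)
        simpa [submatrix_submatrix, Function.comp_assoc] using this)
      (fun j => Function.update d i 0 (i.succAbove j)) (fun j => hd' _)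
    have e : (A - diagonal (Function.update d i 0)).submatrix i.succAbove i.succAbove =
      A.submatrix i.succAbove i.succAbove - diagonal (fun j => Function.update d i 0 (i.succAbove j)) := by
      ext x y
      simp [diagonal_apply]
    rw [e]
    have := mul_nonneg (hd i) J.le
    linarith

def SKP {n : ℕ} (A : Matrix (Fin n) (Fin n) ℝ) : Prop :=
  (∀ (k : ℕ) (f : Fin k → Fin n), StrictMono f → 0 < (A.submatrix f f).det) ∧ QPos A ∧ QPos Aᵀ

lemma SKP.sub {n m : ℕ} {A : Matrix (Fin n) (Fin n) ℝ} (h : SKP A) (g : Fin m → Fin n) (hg : StrictMono g) :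
    SKP (A.submatrix g g) :=
  ⟨fun k f hf => h.1 k (g ∘ f) (hg.comp hf), fun k f hf => h.2.1 k (g ∘ f) (hg.comp hf),
    fun k f hf => h.2.2 k (g ∘ f) (hg.comp hf)⟩

lemma minorOn_eq {n : ℕ} (A : Matrix (Fin n) (Fin n) ℝ) (α β : Finset (Fin n)) (k : ℕ)
    (f g : Fin k → Fin n) (hf : StrictMono f) (hg : StrictMono g)
    (hα : Finset.univ.image f = α) (hβ : Finset.univ.image g = β) :
    minorOn A α β = (A.submatrix f g).det := by
  have c1 : α.card = k := by
    rw [← hα, Finset.card_image_of_injective _ hf.injective]; simp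
  have c2 : β.card = k := by
    rw [← hβ, Finset.card_image_of_injective _ hg.injective]; simp
  subst c1
  rw [minorOn, dif_pos c2]
  congr 2
  · exact (Finset.orderEmbOfFin_unique rfl (fun x => by
      have : f x ∈ Finset.univ.image f := Finset.mem_image_of_mem _ (Finset.mem_univ _)
      rwa [hα] at this) hf).symm
  · exact (Finset.orderEmbOfFin_unique c2 (fun x => by
      have : g x ∈ Finset.univ.image g := Finset.mem_image_of_mem _ (Finset.mem_univ _)
      rwa [hβ] at this) hg).symm

lemma image_erase_zero {n k : ℕ} (f : Fin (k+2) → Fin n) (hf : StrictMono f) (r : Fin (k+2)) :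
    Finset.univ.image (f ∘ r.succAbove) = (Finset.univ.image f).erase (f r) := by
  ext y
  simp only [Finset.mem_image, Finset.mem_univ, true_and, Finset.mem_erase, Function.comp]
  constructor
  · rintro ⟨a, rfl⟩
    exact ⟨fun h => Fin.succAbove_ne r a (hf.injective h), _, rfl⟩
  · rintro ⟨h, a, rfl⟩
    have : a ≠ r := fun e => h (by rw [e])
    obtain ⟨b, rfl⟩ := Fin.exists_succAbove_eq this
    exact ⟨b, rfl⟩

lemma IsSK.skp {n : ℕ} {A : Matrix (Fin n) (Fin n) ℝ} (h : IsSK A) : SKP A := by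
  have apm : ∀ (k : ℕ) (f : Fin (k+2) → Fin n), StrictMono f → ∀ r s : Fin (k+2), r ≠ s →
      0 < (A.submatrix (f ∘ r.succAbove) (f ∘ s.succAbove)).det := by
    intro k f hf r s hrs
    rw [← minorOn_eq A _ _ _ _ _ (hf.comp (Fin.strictMono_succAbove r))
      (hf.comp (Fin.strictMono_succAbove s)) (image_erase_zero f hf r) (image_erase_zero f hf s)]
    exact h.2 _ _ _ (Finset.mem_image_of_mem _ (Finset.mem_univ _))
      (Finset.mem_image_of_mem _ (Finset.mem_univ _)) (fun e => hrs (hf.injective e))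
  refine ⟨fun k f hf => ?_, fun k f hf => ?_, fun k f hf => ?_⟩
  · obtain _ | k := k
    · simp
    rw [← minorOn_eq A _ _ _ _ _ hf hf rfl rfl]
    exact h.1 _ ⟨f 0, by simp⟩
  · have := apm k f hf 0 (Fin.last _) (Fin.last_pos).ne
    have e : (Fin.last (k+1)).succAbove = Fin.castSucc := by ext1; simp
    have e' : (0 : Fin (k+2)).succAbove = Fin.succ := by ext1; simp
    rwa [e, e'] at this
  · have := apm k f hf (Fin.last _) 0 (Fin.last_pos).ne'
    have e : (Fin.last (k+1)).succAbove = Fin.castSucc := by ext1; simp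
    have e' : (0 : Fin (k+2)).succAbove = Fin.succ := by ext1; simp
    rw [e, e'] at this
    rwa [← transpose_submatrix, det_transpose]

lemma key_neg {n : ℕ} {A : Matrix (Fin (n+2)) (Fin (n+2)) ℝ} (hA : SKP A) {x : ℝ} (hx : 0 ≤ x)
    (h : (A.submatrix Fin.succ Fin.succ).charpoly.eval x * (A.submatrix Fin.castSucc Fin.castSucc).charpoly.eval x = 0) :
    A.charpoly.eval x * ((A.submatrix Fin.castSucc Fin.castSucc).submatrix Fin.succ Fin.succ).charpoly.eval x < 0 := by
  rw [desnanot_charpoly, h]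
  have h1 := minor_pos n A hA.2.1 (fun _ => x) (fun _ => hx)
  have h2 := minor_pos n Aᵀ hA.2.2 (fun _ => x) (fun _ => hx)
  rw [← det_transpose, transpose_submatrix, transpose_sub, transpose_transpose, diagonal_transpose] at h2
  have := mul_pos h1 h2
  linarith

lemma interlace {m : ℕ} (q : Polynomial ℝ) (hq : q.Monic) (hd : q.natDegree = m + 1)
    (nu : Fin m → ℝ) (hanti : StrictAnti nu) (hpos : ∀ i, 0 < nu i)
    (hs : ∀ j : Fin m, 0 < (-1)^((j:ℕ)+1) * q.eval (nu j)) (h0 : 0 < (-1)^(m+1) * q.eval 0) :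
    ∃ mu : Fin (m+1) → ℝ, StrictAnti mu ∧ (∀ i, 0 < mu i) ∧ (∀ i, q.eval (mu i) = 0) ∧
      ∀ j : Fin m, mu j.succ < nu j ∧ nu j < mu j.castSucc := by
  have ht : Filter.Tendsto (fun x => q.eval x) Filter.atTop Filter.atTop :=
    Polynomial.tendsto_atTop_of_leadingCoeff_nonneg q
      (Polynomial.natDegree_pos_iff_degree_pos.1 (by omega)) (by rw [hq.leadingCoeff]; norm_num)
  have hB : ∃ B : ℝ, 0 < B ∧ (∀ i, nu i < B) ∧ 0 < q.eval B := by
    have e1 := ht.eventually_gt_atTop 0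
    have e2 := Filter.eventually_gt_atTop (0:ℝ)
    have e3 : ∀ᶠ B in Filter.atTop, ∀ i, nu i < B :=
      Filter.eventually_all.2 fun i => Filter.eventually_gt_atTop _
    obtain ⟨B, h1, h2, h3⟩ := (e1.and (e2.and e3)).exists
    exact ⟨B, h2, h3, h1⟩
  obtain ⟨B, hB0, hBnu, hBq⟩ := hB
  -- endpoints
  let e : ℕ → ℝ := fun i => if i = 0 then B else if h : i - 1 < m then nu ⟨i - 1, h⟩ else 0
  have e0 : e 0 = B := by simp [e]
  have es : ∀ j : Fin m, e (j+1) = nu j := by intro j; simp [e]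
  have el : e (m+1) = 0 := by simp [e]
  have cases : ∀ i, i < m + 2 → i = 0 ∨ (∃ j : Fin m, i = j + 1) ∨ i = m + 1 := by
    intro i hi
    rcases i with _ | i
    · simp
    · by_cases h : i < m
      · exact Or.inr (Or.inl ⟨⟨i, h⟩, rfl⟩)
      · right; right; omega
  have sgn : ∀ i, i < m + 2 → 0 < (-1)^i * q.eval (e i) := by
    intro i hi
    rcases cases i hi with rfl | ⟨j, rfl⟩ | rfl
    · simpa [e0] using hBq
    · rw [es]; exact hs j
    · rw [el]; exact h0
  have dec : ∀ i, i < m + 1 → e (i+1) < e i := by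
    intro i hi
    rcases cases i (by omega) with rfl | ⟨j, rfl⟩ | rfl
    · rw [e0]
      rcases cases 1 (by omega) with h | ⟨j, h⟩ | h
      · omega
      · rw [zero_add, h, es]; exact hBnu j
      · rw [zero_add, h, el]; exact hB0
    · rw [es]
      rcases cases (j+1+1) (by omega) with h | ⟨l, h⟩ | h
      · omega
      · rw [h, es]; exact hanti (by rw [Fin.lt_def]; omega)
      · rw [h, el]; exact hpos j
    · omega
  have nn : ∀ i, i < m + 2 → 0 ≤ e i := by
    intro i hi
    rcases cases i hi with rfl | ⟨j, rfl⟩ | rfl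
    · rw [e0]; exact hB0.le
    · rw [es]; exact (hpos j).le
    · rw [el]
  have ex : ∀ i : Fin (m+1), ∃ y, e (i+1) < y ∧ y < e i ∧ q.eval y = 0 := by
    intro i
    have a := sgn i (by omega)
    have b := sgn (i+1) (by omega)
    have d := dec i i.2
    have hc : ContinuousOn (fun y => (-1)^(i:ℕ) * q.eval y) (Set.Icc (e (i+1)) (e i)) :=
      (continuous_const.mul q.continuous).continuousOn
    have := intermediate_value_Ioo d.le hc
    obtain ⟨y, hy, hy0⟩ := this (show (0:ℝ) ∈ _ from ⟨by rw [pow_succ] at b; linarith, a⟩)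
    refine ⟨y, hy.1, hy.2, ?_⟩
    have : ((-1:ℝ)^(i:ℕ)) ≠ 0 := by simp
    simpa [this] using hy0
  choose mu h1 h2 h3 using ex
  refine ⟨mu, ?_, ?_, h3, ?_⟩
  · rw [Fin.strictAnti_iff_succ_lt]
    intro i
    have a := h2 i.succ
    have b := h1 i.castSucc
    simp only [Fin.val_succ, Fin.val_castSucc] at a b
    linarith
  · intro i
    exact lt_of_le_of_lt (nn (i+1) (by omega)) (h1 i)
  · intro j
    have a := h2 j.succ
    have b := h1 j.castSucc
    simp only [Fin.val_succ, Fin.val_castSucc] at a b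
    rw [es] at a b
    exact ⟨a, b⟩

lemma eq_prod {m : ℕ} (p : Polynomial ℝ) (hp : p.Monic) (hd : p.natDegree = m)
    (nu : Fin m → ℝ) (hinj : Function.Injective nu) (h : ∀ i, p.eval (nu i) = 0) :
    p = ∏ i, (Polynomial.X - Polynomial.C (nu i)) := by
  have hdvd : (∏ i, (Polynomial.X - Polynomial.C (nu i))) ∣ p := by
    apply Finset.prod_dvd_of_coprime
    · intro i _ j _ hij
      exact Polynomial.isCoprime_X_sub_C_of_isUnit_sub (sub_ne_zero.2 (hinj.ne hij)).isUnit
    · intro i _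
      exact Polynomial.dvd_iff_isRoot.2 (h i)
  have hm : (∏ i, (Polynomial.X - Polynomial.C (nu i))).Monic :=
    Polynomial.monic_prod_of_monic _ _ fun i _ => Polynomial.monic_X_sub_C _
  exact (Polynomial.eq_of_monic_of_dvd_of_natDegree_le hm hp hdvd (by
    rw [Polynomial.natDegree_prod_of_monic _ _ fun i _ => Polynomial.monic_X_sub_C _]; simp [hd]))

lemma sign_at {m : ℕ} (p : Polynomial ℝ) (hp : p.Monic) (hd : p.natDegree = m)
    (nu : Fin m → ℝ) (hanti : StrictAnti nu) (h : ∀ i, p.eval (nu i) = 0)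
    (mu : Fin (m+1) → ℝ) (hmu : StrictAnti mu)
    (hi : ∀ j : Fin m, mu j.succ < nu j ∧ nu j < mu j.castSucc) (j : Fin (m+1)) :
    0 < (-1)^(j:ℕ) * p.eval (mu j) := by
  rw [eq_prod p hp hd nu hanti.injective h, Polynomial.eval_prod]
  have e : ((-1:ℝ))^(j:ℕ) = ∏ i : Fin m, (if i.castSucc < j then (-1:ℝ) else 1) := by
    rw [Finset.prod_ite, Finset.prod_const, Finset.prod_const_one, mul_one]
    congr 1
    have := Fin.card_filter_val_lt (n := m) (m := (j : ℕ))
    rw [min_eq_right (by omega)] at this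
    simpa only [Fin.lt_def, Fin.val_castSucc] using this.symm
  rw [e, ← Finset.prod_mul_distrib]
  apply Finset.prod_pos
  intro i _
  simp only [Polynomial.eval_sub, Polynomial.eval_X, Polynomial.eval_C]
  split_ifs with hij
  · have : mu j ≤ mu i.succ := hmu.antitone (by rw [Fin.le_def]; rw [Fin.lt_def] at hij; simp at *; omega)
    have := (hi i).1
    linarith
  · have : mu i.castSucc ≤ mu j := hmu.antitone (not_lt.1 hij)
    have := (hi i).2
    linarith

lemma charpoly_zero_sign {m : ℕ} {A : Matrix (Fin m) (Fin m) ℝ} (hA : SKP A) :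
    0 < (-1)^m * A.charpoly.eval 0 := by
  have := hA.1 m id strictMono_id
  rw [submatrix_id_id, det_eq_sign_charpoly_coeff, Fintype.card_fin, Polynomial.coeff_zero_eq_eval_zero] at this
  exact this

lemma exists_mu (n : ℕ) : ∀ (A : Matrix (Fin (n+1)) (Fin (n+1)) ℝ), SKP A → ∀ k : Fin (n+1),
    (k = 0 ∨ k = Fin.last n) → ∃ mu : Fin n → ℝ, StrictAnti mu ∧ (∀ i, 0 < mu i) ∧
      (∀ j, (A.submatrix k.succAbove k.succAbove).charpoly.eval (mu j) = 0) ∧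
      ∀ j : Fin n, 0 < (-1)^((j:ℕ)+1) * A.charpoly.eval (mu j) := by
  induction n with
  | zero =>
    intro A _ k _
    exact ⟨Fin.elim0, fun i => i.elim0, fun i => i.elim0, fun i => i.elim0, fun i => i.elim0⟩
  | succ n ih =>
    intro A hA k hk
    have e : (Fin.last (n+1)).succAbove = Fin.castSucc := by ext1; simp
    have e' : (0 : Fin (n+2)).succAbove = Fin.succ := by ext1; simp
    have f : (Fin.last n).succAbove = Fin.castSucc := by ext1; simp
    have f' : (0 : Fin (n+1)).succAbove = Fin.succ := by ext1; simp
    have hB := hA.sub k.succAbove (Fin.strictMono_succAbove k)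
    obtain ⟨k', hk', hC⟩ : ∃ k' : Fin (n+1), (k' = 0 ∨ k' = Fin.last n) ∧
        (A.submatrix k.succAbove k.succAbove).submatrix k'.succAbove k'.succAbove =
        (A.submatrix Fin.castSucc Fin.castSucc).submatrix Fin.succ Fin.succ := by
      rcases hk with rfl | rfl
      · refine ⟨Fin.last n, Or.inr rfl, ?_⟩
        rw [e', f]
        ext x y
        simp
      · refine ⟨0, Or.inl rfl, ?_⟩
        rw [e, f']
    obtain ⟨nu, n1, n2, n3, n4⟩ := ih _ hB k' hk'
    obtain ⟨mu, m1, m2, m3, m4⟩ := interlace (A.submatrix k.succAbove k.succAbove).charpoly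
      (charpoly_monic _) (by simp) nu n1 n2 n4 (charpoly_zero_sign hB)
    refine ⟨mu, m1, m2, m3, fun j => ?_⟩
    have s := sign_at _ (charpoly_monic _) (by simp) nu n1 n3 mu m1 m4 j
    rw [hC] at s
    have := key_neg hA (m2 j).le (by
      have := m3 j
      rcases hk with rfl | rfl
      · rw [e'] at this; rw [this, zero_mul]
      · rw [e] at this; rw [this, mul_zero])
    rw [pow_succ]
    rcases neg_one_pow_eq_or ℝ (j:ℕ) with h | h <;> rw [h] at s ⊢ <;> nlinarith

lemma anti_unique {n : ℕ} {a b : Fin n → ℝ} (ha : StrictAnti a) (hb : StrictAnti b)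
    (h : ∀ i, ∃ j, a j = b i) : a = b := by
  choose σ hσ using h
  have inj : Function.Injective σ := fun i j hij => hb.injective (by rw [← hσ, ← hσ, hij])
  have sur := Finite.surjective_of_injective inj
  apply (ha.range_inj hb).1
  ext x
  constructor
  · rintro ⟨j, rfl⟩
    obtain ⟨i, rfl⟩ := sur j
    exact ⟨i, (hσ i).symm⟩
  · rintro ⟨i, rfl⟩
    exact ⟨_, hσ i⟩

lemma root_mem {m n : ℕ} {A : Matrix (Fin m) (Fin m) ℝ} {mu : Fin n → ℝ}
    (hmu : (A.charpoly.map (algebraMap ℝ ℂ)).roots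
      = Multiset.map (fun i => ((mu i : ℝ) : ℂ)) Finset.univ.val) {x : ℝ} (hx : A.charpoly.eval x = 0) :
    ∃ j, mu j = x := by
  have : ((x : ℝ) : ℂ) ∈ (A.charpoly.map (algebraMap ℝ ℂ)).roots := by
    rw [Polynomial.mem_roots ((charpoly_monic A).map _).ne_zero, Polynomial.IsRoot]
    have := Polynomial.eval_map_apply (f := algebraMap ℝ ℂ) (p := A.charpoly) x
    simp only [Complex.coe_algebraMap] at this ⊢
    rw [this, hx]; simp
  rw [hmu] at this
  simpa using this

/-- Let `A` be an `(n+1)×(n+1)` SK-matrix with (simple, positive,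
strictly decreasing) eigenvalues `lam 0 > lam 1 > … > lam n > 0`, let `k` correspond
to `r = 1` (`k = 0`) or `r = n` (`k = Fin.last n`), and let
`mu 0 > … > mu (n-1) > 0` be the eigenvalues of the principal submatrix `A_k`
obtained by deleting the `k`-th row and column. Then `lam j > mu j > lam (j+1)`
for all `j`. -/
theorem sk_interlacing {n : ℕ} (A : Matrix (Fin (n + 1)) (Fin (n + 1)) ℝ)
    (hA : IsSK A) (k : Fin (n + 1)) (hk : k = 0 ∨ k = Fin.last n)
    (lam : Fin (n + 1) → ℝ) (mu : Fin n → ℝ)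
    (hlam_dec : StrictAnti lam) (hlam_pos : ∀ i, 0 < lam i)
    (hmu_dec : StrictAnti mu) (hmu_pos : ∀ i, 0 < mu i)
    (hlam : (A.charpoly.map (algebraMap ℝ ℂ)).roots
      = Multiset.map (fun i => ((lam i : ℝ) : ℂ)) Finset.univ.val)
    (hmu : ((A.submatrix k.succAbove k.succAbove).charpoly.map (algebraMap ℝ ℂ)).roots
      = Multiset.map (fun i => ((mu i : ℝ) : ℂ)) Finset.univ.val) :
    ∀ j : Fin n, mu j < lam j.castSucc ∧ lam j.succ < mu j := by
  obtain ⟨nu, n1, n2, n3, n4⟩ := exists_mu n A hA.skp k hk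
  obtain ⟨la, m1, m2, m3, m4⟩ := interlace A.charpoly
      (charpoly_monic _) (by simp) nu n1 n2 n4 (charpoly_zero_sign hA.skp)
  have e1 : mu = nu := anti_unique hmu_dec n1 fun i => root_mem hmu (n3 i)
  have e2 : lam = la := anti_unique hlam_dec m1 fun i => root_mem hlam (m3 i)
  subst e1 e2
  exact fun j => ⟨(m4 j).2, (m4 j).1⟩
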